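/- Let 𝒳 and 𝒲 be standard Borel spaces, R a probability measure on 𝒲, f : 𝒳 × 𝒲 → 𝒳 measurable with t-step transition maps F_t, and P_* a nominal invariant state distribution ((P_* × R) ∘ f⁻¹ = P_*). For t ≥ 1 and probability measures Φ, Ψ on 𝒳, define J_t(Φ, Ψ) := inf { ∫_𝒳 D(κ(x) ‖ R^{⊗t}) dΦ(x) : κ a Markov kernel from 𝒳 to 𝒲^t with κ(x) ≪ R^{⊗t} for Φ-a.e. x and (Φ ⊗ κ) ∘ F_t⁻¹ = Ψ }, valued in [0,∞]. Then for every probability measure Ψ on 𝒳 and every t ≥ 1, the minimum supply required to reach Ψ from the nominal invariant distribution is nonincreasing in the time horizon: J_{t+1}(P_*, Ψ) ≤ J_t(P_*, Ψ). -/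

import Mathlib

open MeasureTheory ProbabilityTheory
open scoped ENNReal ProbabilityTheory Classical

/-- Kullback-Leibler divergence `D(P ‖ Q)`, valued in `[0,∞]`.  For probability measures with
`P ≪ Q` it equals `∫ log (dP/dQ) dP`, computed here in the equivalent nonnegative form
`∫⁻ (φ log φ - φ + 1) dQ` where `φ = dP/dQ`; it is `∞` when `¬ P ≪ Q`. -/
noncomputable def klDiv {α : Type*} [MeasurableSpace α] (P Q : Measure α) : ℝ≥0∞ :=
  if P ≪ Q then
    ∫⁻ x, ENNReal.ofReal ((P.rnDeriv Q x).toReal * Real.log (P.rnDeriv Q x).toReal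
      - (P.rnDeriv Q x).toReal + 1) ∂Q
  else ∞

/-- The `t`-step state transition maps: `F 0 (x, _) = x` and
`F (k+1) (x, w₀, …, w_k) = f (F k (x, w₀, …, w_{k-1}), w_k)`. -/
def stateTrans {𝒳 𝒲 : Type*} (f : 𝒳 × 𝒲 → 𝒳) : (t : ℕ) → 𝒳 × (Fin t → 𝒲) → 𝒳
  | 0, p => p.1
  | t + 1, p => f (stateTrans f t (p.1, fun i => p.2 i.castSucc), p.2 (Fin.last t))

/-- The minimum required conditional relative entropy supply to drive the state distribution
from `Φ` to `Ψ` under the transition map `F : 𝒳 × 𝒱 → 𝒳` (for `J_t` take `𝒱 = 𝒲^t`,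
`F = F_t` and `Rt = R^{⊗t}`): the infimum over all Markov kernels `κ` with `κ x ≪ Rt` for
`Φ`-a.e. `x` and `(Φ ⊗ κ) ∘ F⁻¹ = Ψ` of `∫ D(κ(x) ‖ Rt) dΦ(x)`, with `inf ∅ = ∞`. -/
noncomputable def reqSupply {𝒳 𝒱 : Type*} [MeasurableSpace 𝒳] [MeasurableSpace 𝒱]
    (F : 𝒳 × 𝒱 → 𝒳) (Rt : Measure 𝒱) (Φ Ψ : Measure 𝒳) : ℝ≥0∞ :=
  ⨅ (κ : Kernel 𝒳 𝒱) (_ : IsMarkovKernel κ) (_ : ∀ᵐ x ∂Φ, κ x ≪ Rt)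
    (_ : (Φ ⊗ₘ κ).map F = Ψ), ∫⁻ x, klDiv (κ x) Rt ∂Φ

/-! The cheapest way to start from `(Φ × R) ∘ f⁻¹` can be delayed by one step: starting from `Φ`,
let nominal noise `w ∼ R` act first and then apply the given control at the new state `f (x, w)`.
The nominal draw is independent of everything that follows, so by the chain rule it adds no relative
entropy and the delayed control has the same cost. When `P_*` is invariant, `(P_* × R) ∘ f⁻¹` is
`P_*` itself. -/

section RelativeEntropy

variable {α β : Type*} [MeasurableSpace α] [MeasurableSpace β]

lemma klDiv_eq_lintegral_klFun (P Q : Measure α) :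
    klDiv P Q = if P ≪ Q then
      ∫⁻ x, ENNReal.ofReal (InformationTheory.klFun (P.rnDeriv Q x).toReal) ∂Q else ∞ := by
  simp only [klDiv, InformationTheory.klFun, sub_add_eq_add_sub]

lemma klDiv_eq_informationTheory_klDiv (P Q : Measure α) [IsFiniteMeasure P] [IsFiniteMeasure Q] :
    klDiv P Q = InformationTheory.klDiv P Q := by
  rw [klDiv_eq_lintegral_klFun, InformationTheory.klDiv_eq_lintegral_klFun]

lemma klDiv_map_le (P Q : Measure α) [IsFiniteMeasure P] [IsFiniteMeasure Q] {g : α → β}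
    (hg : Measurable g) : klDiv (P.map g) (Q.map g) ≤ klDiv P Q := by
  simpa only [klDiv_eq_informationTheory_klDiv] using InformationTheory.klDiv_map_le P Q hg

variable [MeasurableSpace.CountableOrCountablyGenerated α β]
  (κ η : Kernel α β) [IsFiniteKernel κ] [IsFiniteKernel η]

lemma rnDeriv_compProd_right {μ : Measure α} [IsFiniteMeasure μ] (hκη : ∀ᵐ x ∂μ, κ x ≪ η x) :
    (μ ⊗ₘ κ).rnDeriv (μ ⊗ₘ η) =ᵐ[μ ⊗ₘ η] Function.uncurry (κ.rnDeriv η) := by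
  have hdensity : κ =ᵐ[μ] η.withDensity (κ.rnDeriv η) := by
    filter_upwards [hκη] with x hx using (Kernel.withDensity_rnDeriv_eq hx).symm
  have hmeas := Kernel.measurable_rnDeriv κ η
  rw [Measure.compProd_congr hdensity, Measure.compProd_withDensity hmeas]
  exact Measure.rnDeriv_withDensity _ hmeas

lemma klDiv_kernel_eq_lintegral_klFun (x : α) :
    klDiv (κ x) (η x) = if κ x ≪ η x then
      ∫⁻ y, ENNReal.ofReal (InformationTheory.klFun (κ.rnDeriv η x y).toReal) ∂η x else ∞ := by
  rw [klDiv_eq_lintegral_klFun]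
  congr 1
  refine lintegral_congr_ae ?_
  filter_upwards [Kernel.rnDeriv_eq_rnDeriv_measure (κ := κ) (η := η) (a := x)] with y hy
  rw [hy]

lemma measurable_klDiv_kernel : Measurable fun x => klDiv (κ x) (η x) := by
  simp only [klDiv_kernel_eq_lintegral_klFun]
  refine Measurable.ite (Kernel.measurableSet_absolutelyContinuous κ η) ?_ measurable_const
  have hmeas := Kernel.measurable_rnDeriv κ η
  exact Measurable.lintegral_kernel_prod_right
    (InformationTheory.measurable_klFun.comp hmeas.ennreal_toReal).ennreal_ofReal

theorem klDiv_compProd_right (μ : Measure α) [IsFiniteMeasure μ] :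
    klDiv (μ ⊗ₘ κ) (μ ⊗ₘ η) = ∫⁻ x, klDiv (κ x) (η x) ∂μ := by
  rw [klDiv_eq_lintegral_klFun, Measure.absolutelyContinuous_compProd_right_iff]
  split_ifs with hκη
  · calc ∫⁻ p, ENNReal.ofReal
          (InformationTheory.klFun ((μ ⊗ₘ κ).rnDeriv (μ ⊗ₘ η) p).toReal) ∂(μ ⊗ₘ η)
      _ = ∫⁻ p, ENNReal.ofReal
          (InformationTheory.klFun (κ.rnDeriv η p.1 p.2).toReal) ∂(μ ⊗ₘ η) := by
        refine lintegral_congr_ae ?_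
        filter_upwards [rnDeriv_compProd_right κ η hκη] with p hp
        rw [hp, Function.uncurry]
      _ = ∫⁻ x, ∫⁻ y, ENNReal.ofReal
          (InformationTheory.klFun (κ.rnDeriv η x y).toReal) ∂η x ∂μ :=
        Measure.lintegral_compProd (by fun_prop)
      _ = ∫⁻ x, klDiv (κ x) (η x) ∂μ := by
        refine lintegral_congr_ae ?_
        filter_upwards [hκη] with x hx
        rw [klDiv_kernel_eq_lintegral_klFun, if_pos hx]
  · symm
    contrapose! hκη with hfinite
    filter_upwards [ae_lt_top (measurable_klDiv_kernel κ η) hfinite] with x hx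
    by_contra hac
    simp [klDiv, hac] at hx

end RelativeEntropy

section RequiredSupply

variable {𝒳 𝒲 𝒱 : Type*} [MeasurableSpace 𝒳] [MeasurableSpace 𝒲] [MeasurableSpace 𝒱]

lemma reqSupply_le {F : 𝒳 × 𝒱 → 𝒳} {Q : Measure 𝒱} {Φ Ψ : Measure 𝒳} (κ : Kernel 𝒳 𝒱)
    [hκ : IsMarkovKernel κ] (hac : ∀ᵐ x ∂Φ, κ x ≪ Q) (hmap : (Φ ⊗ₘ κ).map F = Ψ) :
    reqSupply F Q Φ Ψ ≤ ∫⁻ x, klDiv (κ x) Q ∂Φ :=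
  iInf₂_le_of_le κ hκ (iInf₂_le hac hmap)

lemma le_reqSupply {F : 𝒳 × 𝒱 → 𝒳} {Q : Measure 𝒱} {Φ Ψ : Measure 𝒳} {c : ℝ≥0∞}
    (h : ∀ κ : Kernel 𝒳 𝒱, IsMarkovKernel κ → (∀ᵐ x ∂Φ, κ x ≪ Q) → (Φ ⊗ₘ κ).map F = Ψ →
      c ≤ ∫⁻ x, klDiv (κ x) Q ∂Φ) : c ≤ reqSupply F Q Φ Ψ :=
  le_iInf₂ fun κ hκ => le_iInf₂ fun hac hmap => h κ hκ hac hmap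

lemma reqSupply_map_le {F : 𝒳 × 𝒱 → 𝒳} (hF : Measurable F) {g : 𝒲 → 𝒱} (hg : Measurable g)
    (Q : Measure 𝒲) [IsFiniteMeasure Q] (Φ Ψ : Measure 𝒳) [SFinite Φ] :
    reqSupply F (Q.map g) Φ Ψ ≤ reqSupply (fun p => F (p.1, g p.2)) Q Φ Ψ := by
  refine le_reqSupply fun κ _ hac hmap => ?_
  have hκ : IsMarkovKernel (κ.map g) := Kernel.IsMarkovKernel.map _ hg
  calc reqSupply F (Q.map g) Φ Ψ
    _ ≤ ∫⁻ x, klDiv (κ.map g x) (Q.map g) ∂Φ := by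
      refine reqSupply_le _ ?_ ?_
      · filter_upwards [hac] with x hx
        rw [Kernel.map_apply _ hg]
        exact hx.map hg
      · rw [Measure.compProd_map hg, Measure.map_map hF (by fun_prop), ← hmap]
        rfl
    _ ≤ ∫⁻ x, klDiv (κ x) Q ∂Φ := by
      refine lintegral_mono fun x => ?_
      rw [Kernel.map_apply _ hg]
      exact klDiv_map_le _ _ hg

lemma map_compProd_comap (μ : Measure 𝒲) [SFinite μ] (κ : Kernel 𝒳 𝒱) [IsSFiniteKernel κ]
    {f : 𝒲 → 𝒳} (hf : Measurable f) :
    (μ ⊗ₘ κ.comap f hf).map (Prod.map f id) = μ.map f ⊗ₘ κ := by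
  ext s hs
  have hpre : MeasurableSet (Prod.map f id ⁻¹' s) := hf.prodMap measurable_id hs
  rw [Measure.map_apply (by fun_prop) hs, Measure.compProd_apply hpre, Measure.compProd_apply hs,
    lintegral_map (Kernel.measurable_kernel_prodMk_left hs) hf]
  rfl

/-- The control `κ` delayed by one step: the noise `w` has its nominal law `R`, and the remaining
noise is drawn from `κ` at the state `f (x, w)` reached meanwhile. -/
noncomputable def delayedKernel (R : Measure 𝒲) {f : 𝒳 × 𝒲 → 𝒳} (hf : Measurable f)
    (κ : Kernel 𝒳 𝒱) : Kernel 𝒳 (𝒲 × 𝒱) :=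
  Kernel.const 𝒳 R ⊗ₖ κ.comap f hf

section Delay

variable (R : Measure 𝒲) {f : 𝒳 × 𝒲 → 𝒳} (hf : Measurable f) (κ : Kernel 𝒳 𝒱)

instance isMarkovKernel_delayedKernel [IsProbabilityMeasure R] [IsMarkovKernel κ] :
    IsMarkovKernel (delayedKernel R hf κ) := by
  unfold delayedKernel
  infer_instance

lemma delayedKernel_apply [SFinite R] [IsSFiniteKernel κ] (x : 𝒳) :
    delayedKernel R hf κ x = R ⊗ₘ κ.comap (fun w => f (x, w)) (by fun_prop) := by
  rw [delayedKernel, Kernel.compProd_apply_eq_compProd_sectR, Kernel.const_apply]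
  rfl

lemma map_compProd_delayedKernel [SFinite R] [IsSFiniteKernel κ] (Φ : Measure 𝒳) [SFinite Φ] :
    (Φ ⊗ₘ delayedKernel R hf κ).map (fun p => (f (p.1, p.2.1), p.2.2))
      = (Φ.prod R).map f ⊗ₘ κ := by
  rw [← map_compProd_comap _ _ hf, ← Measure.compProd_const, ← Measure.compProd_assoc,
    Measure.map_map (by fun_prop) (by fun_prop)]
  rfl

lemma klDiv_delayedKernel [MeasurableSpace.CountableOrCountablyGenerated 𝒲 𝒱] [IsFiniteMeasure R]
    [IsFiniteKernel κ] (Q : Measure 𝒱) [IsFiniteMeasure Q] (x : 𝒳) :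
    klDiv (delayedKernel R hf κ x) (R.prod Q) = ∫⁻ w, klDiv (κ (f (x, w))) Q ∂(R) := by
  rw [delayedKernel_apply, ← Measure.compProd_const, klDiv_compProd_right]
  rfl

lemma lintegral_klDiv_delayedKernel [MeasurableSpace.CountablyGenerated 𝒱] [IsFiniteMeasure R]
    [IsFiniteKernel κ] (Q : Measure 𝒱) [IsFiniteMeasure Q] (Φ : Measure 𝒳) [SFinite Φ] :
    ∫⁻ x, klDiv (delayedKernel R hf κ x) (R.prod Q) ∂Φ
      = ∫⁻ y, klDiv (κ y) Q ∂(Φ.prod R).map f := by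
  have hmeas : Measurable fun y => klDiv (κ y) Q := measurable_klDiv_kernel κ (Kernel.const 𝒳 Q)
  simp only [klDiv_delayedKernel]
  rw [lintegral_map hmeas hf]
  exact (lintegral_prod _ (hmeas.comp hf).aemeasurable).symm

lemma ae_delayedKernel_absolutelyContinuous [SFinite R] [IsSFiniteKernel κ] {Q : Measure 𝒱}
    [SFinite Q] {Φ : Measure 𝒳} [SFinite Φ] (hac : ∀ᵐ y ∂(Φ.prod R).map f, κ y ≪ Q) :
    ∀ᵐ x ∂Φ, delayedKernel R hf κ x ≪ R.prod Q := by
  filter_upwards [Measure.ae_ae_of_ae_prod (ae_of_ae_map hf.aemeasurable hac)] with x hx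
  rw [delayedKernel_apply, ← Measure.compProd_const]
  exact Measure.AbsolutelyContinuous.compProd_right hx

end Delay

theorem reqSupply_nominal_step_le [MeasurableSpace.CountablyGenerated 𝒱]
    (R : Measure 𝒲) [IsProbabilityMeasure R] (Q : Measure 𝒱) [IsFiniteMeasure Q]
    {f : 𝒳 × 𝒲 → 𝒳} (hf : Measurable f) {F : 𝒳 × 𝒱 → 𝒳} (hF : Measurable F)
    (Φ Ψ : Measure 𝒳) [SFinite Φ] :
    reqSupply (fun p : 𝒳 × 𝒲 × 𝒱 => F (f (p.1, p.2.1), p.2.2)) (R.prod Q) Φ Ψ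
      ≤ reqSupply F Q ((Φ.prod R).map f) Ψ := by
  refine le_reqSupply fun κ _ hac hmap => ?_
  rw [← lintegral_klDiv_delayedKernel R hf κ]
  refine reqSupply_le _ (ae_delayedKernel_absolutelyContinuous R hf κ hac) ?_
  rw [← hmap, ← map_compProd_delayedKernel R hf κ Φ, Measure.map_map hF (by fun_prop)]
  rfl

end RequiredSupply

instance countablyGenerated_pi {ι : Type*} [Countable ι] {α : ι → Type*}
    [∀ i, MeasurableSpace (α i)] [∀ i, MeasurableSpace.CountablyGenerated (α i)] :
    MeasurableSpace.CountablyGenerated (∀ i, α i) where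
  isCountablyGenerated := by
    refine ⟨⋃ i, Set.preimage (Function.eval i) '' MeasurableSpace.countableGeneratingSet (α i),
      Set.countable_iUnion fun i =>
        (MeasurableSpace.countable_countableGeneratingSet).image _, ?_⟩
    simp only [← MeasurableSpace.iSup_generateFrom, ← MeasurableSpace.comap_generateFrom,
      MeasurableSpace.generateFrom_countableGeneratingSet]
    rfl

lemma measurePreserving_finCons {n : ℕ} {α : Type*} [MeasurableSpace α]
    (μ : Fin (n + 1) → Measure α) [∀ i, SigmaFinite (μ i)] :
    MeasurePreserving (fun p : α × (Fin n → α) => (Fin.cons p.1 p.2 : Fin (n + 1) → α))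
      ((μ 0).prod (Measure.pi fun i => μ i.succ)) (Measure.pi μ) := by
  convert (measurePreserving_piFinSuccAbove μ 0).symm using 1
  · funext p
    simp [MeasurableEquiv.piFinSuccAbove, Fin.insertNthEquiv]
  · simp only [Fin.zero_succAbove]

section StateTransition

lemma stateTrans_cons {𝒳 𝒲 : Type*} (f : 𝒳 × 𝒲 → 𝒳) (t : ℕ) (x : 𝒳) (w : 𝒲)
    (v : Fin t → 𝒲) :
    stateTrans f (t + 1) (x, Fin.cons w v) = stateTrans f t (f (x, w), v) := by
  induction t with
  | zero => rfl
  | succ t ih =>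
    rw [stateTrans]
    have hinit : (fun i : Fin (t + 1) => (Fin.cons w v : Fin (t + 2) → 𝒲) i.castSucc)
        = Fin.cons w fun i : Fin t => v i.castSucc := by
      funext i
      cases i using Fin.cases <;> rfl
    simp only [hinit, ih]
    rfl

variable {𝒳 𝒲 : Type*} [MeasurableSpace 𝒳] [MeasurableSpace 𝒲]

lemma measurable_stateTrans {f : 𝒳 × 𝒲 → 𝒳} (hf : Measurable f) (t : ℕ) :
    Measurable (stateTrans f t) := by
  induction t with
  | zero => exact measurable_fst
  | succ t ih =>
    change Measurable fun p : 𝒳 × (Fin (t + 1) → 𝒲) =>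
      f (stateTrans f t (p.1, fun i => p.2 i.castSucc), p.2 (Fin.last t))
    fun_prop

theorem reqSupply_antitone_from_invariant_general [MeasurableSpace.CountablyGenerated 𝒲]
    (R : Measure 𝒲) [IsProbabilityMeasure R] {f : 𝒳 × 𝒲 → 𝒳} (hf : Measurable f) (t : ℕ)
    (Φ Ψ : Measure 𝒳) [SFinite Φ] :
    reqSupply (stateTrans f (t + 1)) (Measure.pi fun _ : Fin (t + 1) => R) Φ Ψ
      ≤ reqSupply (stateTrans f t) (Measure.pi fun _ : Fin t => R) ((Φ.prod R).map f) Ψ := by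
  have hcons := measurePreserving_finCons fun _ : Fin (t + 1) => R
  calc reqSupply (stateTrans f (t + 1)) (Measure.pi fun _ : Fin (t + 1) => R) Φ Ψ
    _ ≤ reqSupply (fun p : 𝒳 × 𝒲 × (Fin t → 𝒲) =>
          stateTrans f (t + 1) (p.1, Fin.cons p.2.1 p.2.2))
          (R.prod (Measure.pi fun _ : Fin t => R)) Φ Ψ := by
      rw [← hcons.map_eq]
      exact reqSupply_map_le (measurable_stateTrans hf (t + 1)) hcons.measurable _ Φ Ψ
    _ = reqSupply (fun p : 𝒳 × 𝒲 × (Fin t → 𝒲) => stateTrans f t (f (p.1, p.2.1), p.2.2))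
          (R.prod (Measure.pi fun _ : Fin t => R)) Φ Ψ := by
      simp only [stateTrans_cons]
    _ ≤ reqSupply (stateTrans f t) (Measure.pi fun _ : Fin t => R) ((Φ.prod R).map f) Ψ :=
      reqSupply_nominal_step_le R _ hf (measurable_stateTrans hf t) Φ Ψ

end StateTransition

/-- The minimum supply required to drive the system from the nominal invariant state
distribution `P_*` to `Ψ` is nonincreasing in the time horizon:
`J_{t+1}(P_*, Ψ) ≤ J_t(P_*, Ψ)`. -/
theorem reqSupply_antitone_from_invariant
    {𝒳 𝒲 : Type*} [MeasurableSpace 𝒳] [StandardBorelSpace 𝒳]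
    [MeasurableSpace 𝒲] [StandardBorelSpace 𝒲]
    (R : Measure 𝒲) [IsProbabilityMeasure R]
    (f : 𝒳 × 𝒲 → 𝒳) (hf : Measurable f)
    (Pstar : Measure 𝒳) [IsProbabilityMeasure Pstar]
    (hinv : (Pstar.prod R).map f = Pstar)
    (t : ℕ) (ht : 1 ≤ t)
    (Ψ : Measure 𝒳) [IsProbabilityMeasure Ψ] :
    reqSupply (stateTrans f (t + 1)) (Measure.pi fun _ : Fin (t + 1) => R) Pstar Ψ
      ≤ reqSupply (stateTrans f t) (Measure.pi fun _ : Fin t => R) Pstar Ψ := by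
  simpa only [hinv] using reqSupply_antitone_from_invariant_general R hf t Pstar Ψ
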